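/- Let w ∈ P_A, fix i with 1 ≤ i ≤ d, and let q ∈ Q₁ be a polynomial that agrees with ∂w/∂x_i at every vertex of K (i.e. q is the Q₁ vertex interpolant of ∂w/∂x_i). Then the residual ∂w/∂x_i − q belongs to S^i. -/

import Mathlib

open MvPolynomial MeasureTheory

/-- `Q₁`: the span of the monomials `x^α` with `α i ≤ 1` for every `i`. -/
noncomputable def Q1 (d : ℕ) : Submodule ℝ (MvPolynomial (Fin d) ℝ) :=
  Submodule.span ℝ {p | ∃ α : Fin d →₀ ℕ, (∀ i, α i ≤ 1) ∧ p = monomial α (1 : ℝ)}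

/-- The Adini shape function space `P_A = Q₁ + span{x_i² q : 1 ≤ i ≤ d, q ∈ Q₁}`. -/
noncomputable def PA (d : ℕ) : Submodule ℝ (MvPolynomial (Fin d) ℝ) :=
  Q1 d ⊔ Submodule.span ℝ {p | ∃ i : Fin d, ∃ q ∈ Q1 d, p = X i ^ 2 * q}

/-- `Q₁^i`: elements of `Q₁` of degree 0 in `x_i`. -/
noncomputable def Q1i (d : ℕ) (i : Fin d) : Submodule ℝ (MvPolynomial (Fin d) ℝ) :=
  Submodule.span ℝ
    {p | ∃ α : Fin d →₀ ℕ, (∀ j, α j ≤ 1) ∧ α i = 0 ∧ p = monomial α (1 : ℝ)}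

/-- `S^i = span{((x_j − c_j)² − h_j²) q̂ : 1 ≤ j ≤ d, q̂ ∈ Q₁^i}`. -/
noncomputable def Si (d : ℕ) (c h : Fin d → ℝ) (i : Fin d) :
    Submodule ℝ (MvPolynomial (Fin d) ℝ) :=
  Submodule.span ℝ
    {p | ∃ j : Fin d, ∃ q ∈ Q1i d i, p = ((X j - C (c j)) ^ 2 - C (h j ^ 2)) * q}

/-- The vertices of the `d`-rectangle with centre `c` and half-lengths `h`. -/
def IsVertex {d : ℕ} (c h : Fin d → ℝ) (a : Fin d → ℝ) : Prop :=
  ∀ i, a i = c i - h i ∨ a i = c i + h i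

/-- The `d`-rectangle `K = ∏_i [c_i − h_i, c_i + h_i]`. -/
def box {d : ℕ} (c h : Fin d → ℝ) : Set (Fin d → ℝ) :=
  Set.univ.pi fun i => Set.Icc (c i - h i) (c i + h i)

/-- The iterated partial derivative `∂^α`. -/
noncomputable def pderivPow {d : ℕ} (α : Fin d → ℕ) :
    MvPolynomial (Fin d) ℝ →ₗ[ℝ] MvPolynomial (Fin d) ℝ :=
  (List.ofFn fun i : Fin d =>
    ((pderiv (R := ℝ) i).toLinearMap :
        Module.End ℝ (MvPolynomial (Fin d) ℝ)) ^ α i).prod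

/-- Multiplying a multilinear monomial free of `x_j` by `x_j` stays in `Q₁`. -/
lemma X_mul_mem_Q1 {d : ℕ} (j : Fin d) (β : Fin d →₀ ℕ) (hβ : ∀ k, β k ≤ 1) (h0 : β j = 0) :
    (X j * monomial β (1 : ℝ) : MvPolynomial (Fin d) ℝ) ∈ Q1 d := by
  classical
  apply Submodule.subset_span
  refine ⟨Finsupp.single j 1 + β, fun k => ?_, ?_⟩
  · by_cases hk : j = k
    · subst hk; simp [h0]
    · simpa [Finsupp.single_apply, hk] using hβ k
  · rw [X, monomial_mul, one_mul]

lemma mono_mem_Q1 {d : ℕ} (β : Fin d →₀ ℕ) (hβ : ∀ k, β k ≤ 1) :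
    (monomial β (1 : ℝ) : MvPolynomial (Fin d) ℝ) ∈ Q1 d :=
  Submodule.subset_span ⟨β, hβ, rfl⟩

/-- A multilinear exponent with `α j ≠ 0` splits off the variable `x_j`. -/
lemma split_mono {d : ℕ} (j : Fin d) (α : Fin d →₀ ℕ) (hα : ∀ k, α k ≤ 1) (h0 : α j ≠ 0) :
    ∃ β : Fin d →₀ ℕ, (∀ k, β k ≤ 1) ∧ β j = 0 ∧ (∀ k, α k = 0 → β k = 0) ∧
      (monomial α (1 : ℝ) : MvPolynomial (Fin d) ℝ) = X j * monomial β 1 := by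
  classical
  have h1 : α j = 1 := by have := hα j; omega
  refine ⟨α - Finsupp.single j 1, fun k => ?_, ?_, fun k hk => ?_, ?_⟩
  · have := hα k
    simp only [Finsupp.tsub_apply]; omega
  · simp [h1]
  · simp [hk]
  · rw [X, monomial_mul, one_mul]
    congr 1
    rw [add_tsub_cancel_of_le]
    rw [Finsupp.single_le_iff]; omega

lemma sq_mul_mem0 {d : ℕ} (c h : Fin d → ℝ) (i j : Fin d) (β : Fin d →₀ ℕ)
    (hβ : ∀ k, β k ≤ 1) (hi : β i = 0) (hj : β j = 0) :
    (X j ^ 2 * monomial β (1 : ℝ) : MvPolynomial (Fin d) ℝ) ∈ Q1 d ⊔ Si d c h i := by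
  have e : (X j ^ 2 * monomial β (1 : ℝ) : MvPolynomial (Fin d) ℝ) =
      ((2 * c j) • (X j * monomial β 1) + (h j ^ 2 - c j ^ 2) • monomial β 1) +
      ((X j - C (c j)) ^ 2 - C (h j ^ 2)) * monomial β 1 := by
    simp only [smul_eq_C_mul, map_mul, map_sub, map_pow, map_ofNat]
    ring
  rw [e]
  refine Submodule.add_mem_sup (Submodule.add_mem _ (Submodule.smul_mem _ _ ?_)
    (Submodule.smul_mem _ _ ?_)) ?_
  · exact X_mul_mem_Q1 j β hβ hj
  · exact mono_mem_Q1 β hβ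
  · exact Submodule.subset_span ⟨j, _, Submodule.subset_span ⟨β, hβ, hi, rfl⟩, rfl⟩

lemma sq_mul_mem {d : ℕ} (c h : Fin d → ℝ) (i j : Fin d) (β : Fin d →₀ ℕ)
    (hβ : ∀ k, β k ≤ 1) (hi : β i = 0) :
    (X j ^ 2 * monomial β (1 : ℝ) : MvPolynomial (Fin d) ℝ) ∈ Q1 d ⊔ Si d c h i := by
  by_cases hj : β j = 0
  · exact sq_mul_mem0 c h i j β hβ hi hj
  obtain ⟨γ, hγ, hγj, hγ0, hm⟩ := split_mono j β hβ hj
  have e : (X j ^ 2 * monomial β (1 : ℝ) : MvPolynomial (Fin d) ℝ) =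
      ((2 * c j) • (X j ^ 2 * monomial γ 1) + (h j ^ 2 - c j ^ 2) • monomial β 1) +
      ((X j - C (c j)) ^ 2 - C (h j ^ 2)) * monomial β 1 := by
    rw [hm]
    simp only [smul_eq_C_mul, map_mul, map_sub, map_pow, map_ofNat]
    ring
  rw [e]
  refine Submodule.add_mem _ (Submodule.add_mem _ (Submodule.smul_mem _ _ ?_)
    (Submodule.smul_mem _ _ ?_)) ?_
  · exact sq_mul_mem0 c h i j γ hγ (hγ0 i hi) hγj
  · exact Submodule.mem_sup_left (mono_mem_Q1 β hβ)
  · exact Submodule.mem_sup_right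
      (Submodule.subset_span ⟨j, _, Submodule.subset_span ⟨β, hβ, hi, rfl⟩, rfl⟩)

lemma pderiv_mono_zero {d : ℕ} (i : Fin d) (β : Fin d →₀ ℕ) (hi : β i = 0) :
    pderiv i (monomial β (1 : ℝ)) = 0 := by
  rw [pderiv_monomial, hi]; simp

lemma pderiv_mono_mem {d : ℕ} (i : Fin d) (α : Fin d →₀ ℕ) (hα : ∀ k, α k ≤ 1) :
    pderiv i (monomial α (1 : ℝ)) ∈ Q1 d := by
  by_cases h0 : α i = 0
  · rw [pderiv_mono_zero i α h0]; exact Submodule.zero_mem _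
  · obtain ⟨β, hβ, hβi, -, hm⟩ := split_mono i α hα h0
    rw [hm, pderiv_mul, pderiv_mono_zero i β hβi, pderiv_X_self, one_mul, mul_zero, add_zero]
    exact mono_mem_Q1 β hβ

lemma pderiv_sq_mem {d : ℕ} (c h : Fin d → ℝ) (i j : Fin d) (α : Fin d →₀ ℕ)
    (hα : ∀ k, α k ≤ 1) :
    pderiv i (X j ^ 2 * monomial α (1 : ℝ)) ∈ Q1 d ⊔ Si d c h i := by
  by_cases h0 : α i = 0
  · by_cases hij : j = i
    · subst hij
      have e : pderiv j (X j ^ 2 * monomial α (1 : ℝ)) = (2 : ℝ) • (X j * monomial α 1) := by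
        rw [pderiv_mul, pderiv_mono_zero j α h0, pderiv_pow, pderiv_X_self]
        simp only [smul_eq_C_mul, map_ofNat]
        push_cast
        ring
      rw [e]
      exact Submodule.mem_sup_left (Submodule.smul_mem _ _ (X_mul_mem_Q1 j α hα h0))
    · rw [pderiv_mul, pderiv_mono_zero i α h0, pderiv_pow, pderiv_X_of_ne hij]
      simp
  · obtain ⟨β, hβ, hβi, -, hm⟩ := split_mono i α hα h0
    have hs := sq_mul_mem c h i j β hβ hβi
    by_cases hij : j = i
    · subst hij
      have e : pderiv j (X j ^ 2 * monomial α (1 : ℝ)) =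
          (3 : ℝ) • (X j ^ 2 * monomial β 1) := by
        rw [hm, pderiv_mul, pderiv_mul, pderiv_mono_zero j β hβi, pderiv_pow, pderiv_X_self]
        simp only [smul_eq_C_mul, map_ofNat]
        push_cast
        ring
      rw [e]
      exact Submodule.smul_mem _ _ hs
    · have e : pderiv i (X j ^ 2 * monomial α (1 : ℝ)) = X j ^ 2 * monomial β 1 := by
        rw [hm, pderiv_mul, pderiv_mul, pderiv_mono_zero i β hβi, pderiv_pow, pderiv_X_self,
          pderiv_X_of_ne hij]
        ring
      rw [e]; exact hs

lemma pderiv_PA {d : ℕ} (c h : Fin d → ℝ) (i : Fin d) (w : MvPolynomial (Fin d) ℝ)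
    (hw : w ∈ PA d) : pderiv i w ∈ Q1 d ⊔ Si d c h i := by
  have hmul : ∀ (j : Fin d) (q : MvPolynomial (Fin d) ℝ), q ∈ Q1 d →
      pderiv i (X j ^ 2 * q) ∈ Q1 d ⊔ Si d c h i := by
    intro j q hq
    induction hq using Submodule.span_induction with
    | mem x hx =>
      obtain ⟨α, hα, rfl⟩ := hx
      exact pderiv_sq_mem c h i j α hα
    | zero => rw [mul_zero, map_zero]; exact Submodule.zero_mem _
    | add x y _ _ hx hy => rw [mul_add, map_add]; exact Submodule.add_mem _ hx hy
    | smul r x _ hx =>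
      rw [mul_smul_comm, Derivation.map_smul]; exact Submodule.smul_mem _ _ hx
  obtain ⟨u, hu, v, hv, rfl⟩ := Submodule.mem_sup.1 hw
  rw [map_add]
  refine Submodule.add_mem _ (Submodule.mem_sup_left ?_) ?_
  · clear hw hmul
    induction hu using Submodule.span_induction with
    | mem x hx =>
      obtain ⟨α, hα, rfl⟩ := hx
      exact pderiv_mono_mem i α hα
    | zero => rw [map_zero]; exact Submodule.zero_mem _
    | add x y _ _ hx hy => rw [map_add]; exact Submodule.add_mem _ hx hy
    | smul r x _ hx =>
      rw [Derivation.map_smul]; exact Submodule.smul_mem _ _ hx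
  · clear hw
    induction hv using Submodule.span_induction with
    | mem x hx =>
      obtain ⟨j, q, hq, rfl⟩ := hx
      exact hmul j q hq
    | zero => rw [map_zero]; exact Submodule.zero_mem _
    | add x y _ _ hx hy => rw [map_add]; exact Submodule.add_mem _ hx hy
    | smul r x _ hx =>
      rw [Derivation.map_smul]; exact Submodule.smul_mem _ _ hx

lemma eval_Si {d : ℕ} (c h : Fin d → ℝ) (i : Fin d) (a : Fin d → ℝ) (ha : IsVertex c h a)
    (s : MvPolynomial (Fin d) ℝ) (hs : s ∈ Si d c h i) : eval a s = 0 := by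
  induction hs using Submodule.span_induction with
  | mem x hx =>
    obtain ⟨j, q, -, rfl⟩ := hx
    have : (a j - c j) ^ 2 - h j ^ 2 = 0 := by
      rcases ha j with e | e <;> rw [e] <;> ring
    simp [this]
  | zero => simp
  | add x y _ _ hx hy => simp [hx, hy]
  | smul r x _ hx => simp [hx]

lemma Q1_unisolvent {d : ℕ} (c h : Fin d → ℝ) (hh : ∀ i, 0 < h i)
    (p : MvPolynomial (Fin d) ℝ) (hp : p ∈ Q1 d)
    (h0 : ∀ a : Fin d → ℝ, IsVertex c h a → eval a p = 0) : p = 0 := by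
  classical
  have hdeg : p ∈ restrictDegree (Fin d) ℝ 1 := by
    have : Q1 d ≤ restrictDegree (Fin d) ℝ 1 := by
      refine Submodule.span_le.2 ?_
      rintro _ ⟨α, hα, rfl⟩
      rw [SetLike.mem_coe, mem_restrictDegree]
      intro s hs k
      have := support_monomial_subset hs
      rw [Finset.mem_singleton] at this
      subst this
      exact hα k
    exact this hp
  rw [mem_restrictDegree] at hdeg
  refine MvPolynomial.eq_zero_of_eval_zero_at_prod_finset p
    (fun k => {c k - h k, c k + h k}) (fun k => ?_) (fun a ha => ?_)
  · have hne : c k - h k ≠ c k + h k := by have := hh k; intro e; linarith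
    rw [Finset.card_pair hne, degreeOf_lt_iff (by norm_num)]
    intro m hm
    have := hdeg m hm k
    omega
  · exact h0 a fun k => by simpa using ha k

/-- if `w ∈ P_A` and `q ∈ Q₁` is the `Q₁` vertex interpolant of `∂w/∂x_i`,
then the residual `∂w/∂x_i − q` belongs to `S^i`. -/
theorem adini_residual_mem_Si (d : ℕ) (hd : 1 ≤ d) (c h : Fin d → ℝ) (hh : ∀ i, 0 < h i)
    (w : MvPolynomial (Fin d) ℝ) (hw : w ∈ PA d) (i : Fin d)
    (q : MvPolynomial (Fin d) ℝ) (hq : q ∈ Q1 d)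
    (hagree : ∀ a : Fin d → ℝ, IsVertex c h a → eval a q = eval a (pderiv i w)) :
    pderiv i w - q ∈ Si d c h i := by
  obtain ⟨r, hr, s, hs, e⟩ := Submodule.mem_sup.1 (pderiv_PA c h i w hw)
  have hz : r - q = 0 := by
    refine Q1_unisolvent c h hh _ (Submodule.sub_mem _ hr hq) fun a ha => ?_
    rw [map_sub, hagree a ha, ← e, map_add, eval_Si c h i a ha s hs]
    ring
  have e2 : pderiv i w - q = s := by
    rw [← e, ← sub_eq_zero.1 hz]; ring
  rw [e2]
  exact hs
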